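/- Let r,q ≥ 1 with rq > 1. Then the permutation σ_{rq} is Morse, i.e., all its Morse numbers satisfy i_j ≥ 0. Moreover, writing μ_{rq}(i) := #{ j ∈ {1,…,N} : i_j = i }, one has: μ_{rq}(i) = 3+2i for 0 ≤ i < min{r,q}; μ_{rq}(i) = 2+2·min{r,q} for min{r,q} ≤ i < max{r,q}; μ_{rq}(i) = 2(r+q)+1−2i for max{r,q} ≤ i ≤ r+q; and μ_{rq}(i) = 0 for i > r+q. -/

import Mathlib

/-- Morse numbers `i_j` of a permutation `σ` of `{1,…,N}` (extended to `ℕ`),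
via the recursion `i_1 = 0`,
`i_{j+1} = i_j + (-1)^(j+1) * sign (σ⁻¹(j+1) - σ⁻¹(j))`. -/
def morse (σ : Equiv.Perm ℕ) : ℕ → ℤ
  | 0 => 0
  | 1 => 0
  | (j+2) => morse σ (j+1) +
      (-1)^(j+2) * Int.sign ((σ.symm (j+2) : ℤ) - (σ.symm (j+1) : ℤ))

/-- Zero numbers `z_{j k}`, recursion in the first index `j`, second index `k` fixed:
`z_{1k} = 0`, `z_{kk} = i_k`, `z_{k+1,k} = min (i_k, i_{k+1})`, and otherwise
`z_{j+1,k} = z_{jk} + ((-1)^(j+1)/2) * (sign (σ⁻¹(j+1) - σ⁻¹(k)) - sign (σ⁻¹(j) - σ⁻¹(k)))`. -/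
def zrec (σ : Equiv.Perm ℕ) (k : ℕ) : ℕ → ℤ
  | 0 => 0
  | 1 => 0
  | (j+2) =>
      if j+2 = k then morse σ k
      else if j+1 = k then min (morse σ k) (morse σ (k+1))
      else zrec σ k (j+1) +
        ((-1)^(j+2) * (Int.sign ((σ.symm (j+2) : ℤ) - (σ.symm k : ℤ))
          - Int.sign ((σ.symm (j+1) : ℤ) - (σ.symm k : ℤ)))) / 2

/-- The zero number `z_{m n}`. -/
def zfun (σ : Equiv.Perm ℕ) (m n : ℕ) : ℤ := zrec σ n m

/-- The connection digraph of a dissipative Morse permutation `σ` of `{1,…,N}`: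
an edge `m ⤳ n` iff `i_m = i_n + 1` and no `w` strictly between `m` and `n`
blocks, i.e. satisfies `z_{mw} = z_{wn} = z_{mn}`. -/
def hasEdge (N : ℕ) (σ : Equiv.Perm ℕ) (m n : ℕ) : Prop :=
  1 ≤ m ∧ m ≤ N ∧ 1 ≤ n ∧ n ≤ N ∧
  morse σ m = morse σ n + 1 ∧
  ¬ ∃ w : ℕ, min m n < w ∧ w < max m n ∧
      zfun σ m w = zfun σ w n ∧ zfun σ w n = zfun σ m n

/-- A dissipative permutation of `{1,…,N}`. -/
def Dissipative (N : ℕ) (σ : Equiv.Perm ℕ) : Prop :=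
  Set.BijOn σ (Set.Icc 1 N) (Set.Icc 1 N) ∧ σ 1 = 1 ∧ σ N = N

/-- The Morse property: all Morse numbers are nonnegative. -/
def MorseProp (N : ℕ) (σ : Equiv.Perm ℕ) : Prop :=
  ∀ j, 1 ≤ j → j ≤ N → 0 ≤ morse σ j

/-- Morse counts `μ(i) = #{j ∈ {1,…,N} : i_j = i}`. -/
def morseCount (N : ℕ) (σ : Equiv.Perm ℕ) (i : ℤ) : ℕ :=
  ((Finset.Icc 1 N).filter (fun j => morse σ j = i)).card

/-- The primitive 3-nose permutation `σ_{rq}` of `{1,…,N}`, `N = 2(r+1)(q+1)-1`,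
characterized by its defining relations, extended to a permutation of `ℕ`
fixing everything outside `{1,…,N}`. -/
def SigmaRQ (r q : ℕ) (σ : Equiv.Perm ℕ) : Prop :=
  (∀ a, a ∉ Set.Icc 1 (2*(r+1)*(q+1) - 1) → σ a = a) ∧
  (∀ j k, j ≤ r → k ≤ q →
    σ (2*((q+1)*j+k)+1) = 2*(j+(r+1)*k)+1) ∧
  (∀ j k, j ≤ r → k ≤ q → ¬(j = 0 ∧ k = 0) →
    σ (2*((q+1)*(r-j)+(q-k)+1)) = 2*(j+(r+1)*k))

/-- Tags `A`, `B` of equilibrium labels `A^j_k`, `B^j_k`. -/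
inductive Tag | A | B
deriving DecidableEq

/-- The axis position (`h_1`-position) of the label `L^j_k` for parameters `(r,q)`. -/
def axisPos (r q : ℕ) : Tag → ℕ → ℕ → ℕ
  | Tag.A, j, k => if Odd j then (q+1)*(j-1)+k+1 else (q+1)*(2*r+1-j)+(q-k)+1
  | Tag.B, j, k => if Odd j then (q+1)*j+(q-k)+1 else (q+1)*(2*r-j)+k+1

/-- The meander position (`h_0`-position) of the label `L^j_k` for parameters `(r,q)`. -/
def meanderPos (r q : ℕ) : Tag → ℕ → ℕ → ℕ
  | Tag.A, j, k => if Odd k then (r+1)*(2*q+1-k)+(2*r+1-j) else (r+1)*k+j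
  | Tag.B, j, k => if Odd k then (r+1)*(2*q+1-k)+j else (r+1)*(k+1)+(r-j)

/-- The suspension `σ̃` of a dissipative permutation `σ` of `{1,…,N}`:
`σ̃(1) = 1`, `σ̃(N+2) = N+2`, and `σ̃(a+1) = N+2 - σ(a)` for `1 ≤ a ≤ N`. -/
def IsSuspension (N : ℕ) (σ σt : Equiv.Perm ℕ) : Prop :=
  σt 1 = 1 ∧ σt (N+2) = N+2 ∧ ∀ a, 1 ≤ a → a ≤ N → σt (a+1) = N+2 - σ a

/-- The label `A^0_0` is the distinguished (formal) vertex `⋆`. -/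
def IsStar (L : Tag) (j k : ℕ) : Prop := L = Tag.A ∧ j = 0 ∧ k = 0

/-- Tag swap `A ↔ B`, used by the reversor. -/
def tagSwap : Tag → Tag
  | Tag.A => Tag.B
  | Tag.B => Tag.A

/-!
Arrange the positions `2n, 2n+1` with `n = j + (r+1)k` in a grid of pairs `(j, k)`. The permutation
`σ⁻¹` sends the odd position to `2m+1` and the even one to `2((r+1)(q+1) - m)`, where
`m = (q+1)j + k` is the transposed index, so every sign in the Morse recursion only compares
`m + m'` with `(r+1)(q+1)`, where `m'` is `m` itself or its successor along the path. Hence the pair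
`(j, k)` carries the two Morse numbers `h` and `h - 1`, where the height `h = x + y` is the sum of
two coordinates that run zigzag, through the even numbers upwards and then the odd numbers
downwards. As `(x, y)` runs over the whole box `[0, r] × [0, q]`, the Morse numbers together with
the fictitious `i_0 = -1` are the values `x + y` and `x + y - 1` on that box, and what remains is to
count its antidiagonals.
-/

open Finset

section Sums

variable {M : Type*} [AddCommMonoid M]

theorem sum_range_mul (f : ℕ → M) (a b : ℕ) :
    ∑ n ∈ range (a * b), f n = ∑ z ∈ range a ×ˢ range b, f (z.1 + a * z.2) := by
  rw [sum_product_right]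
  induction b with
  | zero => simp
  | succ b ih =>
    rw [Nat.mul_succ, sum_range_add, ih, sum_range_succ]
    simp only [add_comm]

/-- The enumeration `0, 2, 4, …, 5, 3, 1` of `{0, …, r}`, indexed by `j ≤ r`: one coordinate of the
path along which the Morse numbers are read off. -/
def zigzag (r j : ℕ) : ℕ := if 2 * j ≤ r then 2 * j else 2 * (r - j) + 1

theorem sum_zigzag (f : ℕ → M) (r : ℕ) :
    ∑ j ∈ range (r + 1), f (zigzag r j) = ∑ x ∈ range (r + 1), f x := by
  have mapsTo : Set.MapsTo (zigzag r) (range (r + 1)) (range (r + 1)) := by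
    intro j
    simp only [zigzag, coe_range, Set.mem_Iio]
    split_ifs <;> omega
  have injOn : Set.InjOn (zigzag r) (range (r + 1)) := by
    intro i hi j hj
    simp only [zigzag, coe_range, Set.mem_Iio] at hi hj ⊢
    split_ifs <;> omega
  exact sum_nbij (zigzag r) mapsTo injOn (surjOn_of_injOn_of_card_le _ mapsTo injOn le_rfl)
    fun _ _ => rfl

/-- The larger of the two Morse numbers carried by the grid point `(j, k)`, `j ≤ r`, `k ≤ q`.
The first coordinate is traversed backwards in the rows `k` of odd `zigzag q k`. -/
def height (r q j k : ℕ) : ℕ :=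
  (if 2 * k ≤ q then zigzag r j else zigzag r (r - j)) + zigzag q k

theorem sum_height (f : ℕ → M) (r q : ℕ) :
    ∑ z ∈ range (r + 1) ×ˢ range (q + 1), f (height r q z.1 z.2) =
      ∑ z ∈ range (r + 1) ×ˢ range (q + 1), f (z.1 + z.2) := by
  rw [sum_product_right, sum_product_right,
    ← sum_zigzag (fun y => ∑ x ∈ range (r + 1), f (x + y)) q]
  refine sum_congr rfl fun k _ => ?_
  rw [← sum_zigzag (fun x => f (x + zigzag q k)) r]
  by_cases hk : 2 * k ≤ q
  · simp only [height, hk, if_true]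
  · rw [← sum_range_reflect (fun j => f (zigzag r j + zigzag q k))]
    simp only [height, hk, if_false, Nat.add_sub_cancel]

end Sums

theorem card_filter_add_eq (r q i : ℕ) :
    #{z ∈ range (r + 1) ×ˢ range (q + 1) | z.1 + z.2 = i} = min i q + 1 - (i - r) := by
  rw [← Nat.card_Icc]
  refine card_bij' (fun z _ => z.2) (fun y _ => (i - y, y)) ?_ ?_ ?_ ?_
  · intro z hz
    simp only [mem_filter, mem_product, mem_range, mem_Icc] at hz ⊢
    omega
  · intro y hy
    simp only [mem_filter, mem_product, mem_range, mem_Icc] at hy ⊢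
    omega
  · intro z hz
    exact Prod.ext (Nat.sub_eq_of_eq_add (mem_filter.1 hz).2.symm) rfl
  · exact fun _ _ => rfl

/-- The largest even integer that is at most `h`: the Morse number at the odd position of a pair of
height `h`. -/
def evenFloor (h : ℤ) : ℤ := 2 * (h / 2)

/-- The largest odd integer that is at most `h`: the Morse number at the even position of a pair of
height `h`. -/
def oddFloor (h : ℤ) : ℤ := 2 * ((h + 1) / 2) - 1

theorem add_oddFloor_evenFloor {M : Type*} [AddCommMonoid M] (f : ℤ → M) (h : ℤ) :
    f (oddFloor h) + f (evenFloor h) = f h + f (h - 1) := by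
  rcases Int.emod_two_eq_zero_or_one h with heven | hodd
  · rw [show oddFloor h = h - 1 by unfold oddFloor; omega,
      show evenFloor h = h by unfold evenFloor; omega, add_comm]
  · rw [show oddFloor h = h by unfold oddFloor; omega,
      show evenFloor h = h - 1 by unfold evenFloor; omega]

section Height

variable {r q j k : ℕ}

theorem mul_add_two_mul_lt_mul_iff (hk : k ≤ q) (a : ℕ) :
    (q + 1) * a + 2 * k < (r + 1) * (q + 1) ↔ if 2 * k ≤ q then a ≤ r else a < r := by
  have hquot : 2 * k / (q + 1) = if 2 * k ≤ q then 0 else 1 := by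
    split_ifs with h
    · exact Nat.div_eq_of_lt (by omega)
    · exact Nat.div_eq_of_lt_le (by omega) (by omega)
  rw [← Nat.div_lt_iff_lt_mul q.succ_pos, Nat.mul_add_div q.succ_pos, hquot]
  split_ifs <;> omega

theorem evenFloor_height (hk : k ≤ q) :
    evenFloor (height r q j k) = oddFloor (height r q j k) +
      if (q + 1) * (2 * j) + 2 * k < (r + 1) * (q + 1) then 1 else -1 := by
  simp only [mul_add_two_mul_lt_mul_iff hk, evenFloor, oddFloor, height, zigzag]
  split_ifs <;> omega

theorem oddFloor_height_succ_left (hj : j < r) (hk : k ≤ q) :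
    oddFloor (height r q (j + 1) k) = evenFloor (height r q j k) +
      if (q + 1) * (2 * j + 1) + 2 * k < (r + 1) * (q + 1) then 1 else -1 := by
  simp only [mul_add_two_mul_lt_mul_iff hk, evenFloor, oddFloor, height, zigzag]
  split_ifs <;> omega

theorem oddFloor_height_zero_succ (hk : k < q) :
    oddFloor (height r q 0 (k + 1)) = evenFloor (height r q r k) +
      if 2 * k < q then 1 else -1 := by
  simp only [evenFloor, oddFloor, height, zigzag]
  split_ifs <;> omega

end Height

theorem sign_two_mul_add_one (a : ℤ) : Int.sign (2 * a + 1) = if 0 ≤ a then 1 else -1 := by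
  split_ifs with ha
  · exact Int.sign_eq_one_of_pos (by omega)
  · exact Int.sign_eq_neg_one_of_neg (by omega)

theorem morse_two_mul_add_one (σ : Equiv.Perm ℕ) {n : ℕ} (hn : n ≠ 0) :
    morse σ (2 * n + 1) =
      morse σ (2 * n) + Int.sign ((σ.symm (2 * n) : ℤ) - σ.symm (2 * n + 1)) := by
  obtain ⟨m, rfl⟩ := Nat.exists_eq_succ_of_ne_zero hn
  have hodd : Odd (2 * m + 1 + 2) := ⟨m + 1, by ring⟩
  change morse σ (2 * m + 1 + 2) = _
  rw [morse, hodd.neg_one_pow, neg_one_mul, ← Int.sign_neg, neg_sub]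
  rfl

theorem morse_two_mul_add_two (σ : Equiv.Perm ℕ) (n : ℕ) :
    morse σ (2 * n + 2) =
      morse σ (2 * n + 1) + Int.sign ((σ.symm (2 * n + 2) : ℤ) - σ.symm (2 * n + 1)) := by
  have heven : Even (2 * n + 2) := ⟨n + 1, by ring⟩
  rw [morse, heven.neg_one_pow, one_mul]

namespace SigmaRQ

variable {r q j k : ℕ} {σ : Equiv.Perm ℕ}

theorem symm_odd (hσ : SigmaRQ r q σ) (hj : j ≤ r) (hk : k ≤ q) :
    σ.symm (2 * (j + (r + 1) * k) + 1) = 2 * ((q + 1) * j + k) + 1 := by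
  rw [Equiv.symm_apply_eq, hσ.2.1 j k hj hk]

theorem symm_even (hσ : SigmaRQ r q σ) (hj : j ≤ r) (hk : k ≤ q) (h0 : ¬(j = 0 ∧ k = 0)) :
    (σ.symm (2 * (j + (r + 1) * k)) : ℤ) = 2 * ((r + 1) * (q + 1) - ((q + 1) * j + k)) := by
  rw [(Equiv.symm_apply_eq σ).2 (hσ.2.2 j k hj hk h0).symm]
  push_cast [Nat.cast_sub hj, Nat.cast_sub hk]
  ring

theorem morse_odd_eq_morse_even_add (hσ : SigmaRQ r q σ) (hj : j ≤ r) (hk : k ≤ q)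
    (h0 : ¬(j = 0 ∧ k = 0)) :
    morse σ (2 * (j + (r + 1) * k) + 1) = morse σ (2 * (j + (r + 1) * k)) +
      if (q + 1) * (2 * j) + 2 * k < (r + 1) * (q + 1) then 1 else -1 := by
  have hn : j + (r + 1) * k ≠ 0 := by simpa using h0
  have hsub : (σ.symm (2 * (j + (r + 1) * k)) : ℤ) - σ.symm (2 * (j + (r + 1) * k) + 1) =
      2 * ((r + 1) * (q + 1) - ((q + 1) * (2 * j) + 2 * k) - 1) + 1 := by
    rw [hσ.symm_even hj hk h0, hσ.symm_odd hj hk]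
    push_cast
    ring
  rw [morse_two_mul_add_one σ hn, hsub, sign_two_mul_add_one]
  congr 1
  exact if_congr (by zify; omega) rfl rfl

theorem morse_even_eq_morse_odd_add (hσ : SigmaRQ r q σ) (hj : j < r) (hk : k ≤ q) :
    morse σ (2 * (j + 1 + (r + 1) * k)) = morse σ (2 * (j + (r + 1) * k) + 1) +
      if (q + 1) * (2 * j + 1) + 2 * k < (r + 1) * (q + 1) then 1 else -1 := by
  have hnext : 2 * (j + 1 + (r + 1) * k) = 2 * (j + (r + 1) * k) + 2 := by ring
  have hsub : (σ.symm (2 * (j + 1 + (r + 1) * k)) : ℤ) - σ.symm (2 * (j + (r + 1) * k) + 1) =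
      2 * ((r + 1) * (q + 1) - ((q + 1) * (2 * j + 1) + 2 * k) - 1) + 1 := by
    rw [hσ.symm_even hj hk (by omega), hσ.symm_odd hj.le hk]
    push_cast
    ring
  rw [hnext] at hsub ⊢
  rw [morse_two_mul_add_two, hsub, sign_two_mul_add_one]
  congr 1
  exact if_congr (by zify; omega) rfl rfl

theorem morse_even_eq_morse_odd_add_of_row_end (hσ : SigmaRQ r q σ) (hk : k < q) :
    morse σ (2 * (0 + (r + 1) * (k + 1))) = morse σ (2 * (r + (r + 1) * k) + 1) +
      if 2 * k < q then 1 else -1 := by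
  have hnext : 2 * (0 + (r + 1) * (k + 1)) = 2 * (r + (r + 1) * k) + 2 := by ring
  have hsub : (σ.symm (2 * (0 + (r + 1) * (k + 1))) : ℤ) - σ.symm (2 * (r + (r + 1) * k) + 1) =
      2 * (q - 2 * k - 1) + 1 := by
    rw [hσ.symm_even r.zero_le hk (by omega), hσ.symm_odd le_rfl hk.le]
    push_cast
    ring
  rw [hnext] at hsub ⊢
  rw [morse_two_mul_add_two, hsub, sign_two_mul_add_one]
  congr 1
  exact if_congr (by omega) rfl rfl

theorem morse_odd (hσ : SigmaRQ r q σ) (hj : j ≤ r) (hk : k ≤ q) :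
    morse σ (2 * (j + (r + 1) * k) + 1) = evenFloor (height r q j k) := by
  have row {k : ℕ} (hk : k ≤ q)
      (hstart : morse σ (2 * (0 + (r + 1) * k) + 1) = evenFloor (height r q 0 k)) :
      ∀ j ≤ r, morse σ (2 * (j + (r + 1) * k) + 1) = evenFloor (height r q j k) := by
    intro j hj
    induction j with
    | zero => exact hstart
    | succ j ih =>
      rw [hσ.morse_odd_eq_morse_even_add hj hk (by omega), hσ.morse_even_eq_morse_odd_add hj hk,
        ih (by omega), ← oddFloor_height_succ_left hj hk, ← evenFloor_height hk]
  induction k generalizing j with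
  | zero => exact row hk (by simp [morse, evenFloor, height, zigzag]) j hj
  | succ k ih =>
    refine row hk ?_ j hj
    rw [hσ.morse_odd_eq_morse_even_add r.zero_le hk (by omega),
      hσ.morse_even_eq_morse_odd_add_of_row_end hk, ih le_rfl (by omega),
      ← oddFloor_height_zero_succ hk, ← evenFloor_height hk]

-- With `i_0 = -1` the formula holds at the corner `(0, 0)` of the grid too.
theorem update_morse_even (hσ : SigmaRQ r q σ) (hj : j ≤ r) (hk : k ≤ q) :
    Function.update (morse σ) 0 (-1) (2 * (j + (r + 1) * k)) = oddFloor (height r q j k) := by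
  by_cases h0 : j = 0 ∧ k = 0
  · obtain ⟨rfl, rfl⟩ := h0
    simp [oddFloor, height, zigzag]
  · have hn : 2 * (j + (r + 1) * k) ≠ 0 := by simpa using h0
    rw [Function.update_of_ne hn]
    have hodd := hσ.morse_odd hj hk
    rw [hσ.morse_odd_eq_morse_even_add hj hk h0, evenFloor_height hk] at hodd
    exact add_right_cancel hodd

theorem sum_morse {M : Type*} [AddCommMonoid M] (hσ : SigmaRQ r q σ) (f : ℤ → M) :
    f (-1) + ∑ p ∈ Icc 1 (2 * (r + 1) * (q + 1) - 1), f (morse σ p) =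
      ∑ z ∈ range (r + 1) ×ˢ range (q + 1), (f ↑(z.1 + z.2) + f (↑(z.1 + z.2) - 1)) := by
  let i := Function.update (morse σ) 0 (-1)
  have hi {p : ℕ} (hp : p ≠ 0) : i p = morse σ p := Function.update_of_ne hp ..
  have hN : 0 < 2 * ((r + 1) * (q + 1)) := by positivity
  calc
    _ = ∑ p ∈ range (2 * ((r + 1) * (q + 1))), f (i p) := by
      rw [range_eq_Ico, sum_eq_sum_Ico_succ_bot hN, mul_assoc]
      congr 1
      refine sum_congr (by ext; simp only [mem_Icc, mem_Ico]; omega) fun p hp => ?_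
      rw [hi (by have := (mem_Icc.1 hp).1; omega)]
    _ = ∑ z ∈ range (r + 1) ×ˢ range (q + 1),
          (f (i (2 * (z.1 + (r + 1) * z.2))) + f (i (2 * (z.1 + (r + 1) * z.2) + 1))) := by
      rw [← sum_range_mul fun n => f (i (2 * n)) + f (i (2 * n + 1)), sum_range_mul,
        sum_product_right]
      refine sum_congr rfl fun n _ => ?_
      rw [sum_range_succ, sum_range_one, zero_add, add_comm 1]
    _ = ∑ z ∈ range (r + 1) ×ˢ range (q + 1),
          (f (height r q z.1 z.2) + f (height r q z.1 z.2 - 1)) := by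
      refine sum_congr rfl fun z hz => ?_
      simp only [mem_product, mem_range, Nat.lt_succ_iff] at hz
      have heven : i (2 * (z.1 + (r + 1) * z.2)) = oddFloor (height r q z.1 z.2) :=
        hσ.update_morse_even hz.1 hz.2
      rw [heven, hi (Nat.succ_ne_zero _), hσ.morse_odd hz.1 hz.2, add_oddFloor_evenFloor]
    _ = _ := sum_height (fun h => f h + f (h - 1)) r q

theorem morseProp (hσ : SigmaRQ r q σ) : MorseProp (2 * (r + 1) * (q + 1) - 1) σ := by
  have hsum := hσ.sum_morse fun v => if v < 0 then 1 else 0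
  have hbox : ∀ z : ℕ × ℕ, ((if ((z.1 + z.2 : ℕ) : ℤ) < 0 then 1 else 0) +
      if ((z.1 + z.2 : ℕ) : ℤ) - 1 < 0 then 1 else 0) = if z.1 + z.2 = 0 then 1 else 0 := by
    intro z
    split_ifs <;> omega
  simp only [hbox, ← card_filter, card_filter_add_eq] at hsum
  have hneg : #{p ∈ Icc 1 (2 * (r + 1) * (q + 1) - 1) | morse σ p < 0} = 0 := by
    simpa using hsum
  intro p hp hpN
  exact not_lt.1 (filter_eq_empty_iff.1 (card_eq_zero.1 hneg) (mem_Icc.2 ⟨hp, hpN⟩))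

theorem morseCount_eq (hσ : SigmaRQ r q σ) (i : ℕ) :
    morseCount (2 * (r + 1) * (q + 1) - 1) σ i =
      (min i q + 1 - (i - r)) + (min (i + 1) q + 1 - (i + 1 - r)) := by
  have hsum := hσ.sum_morse fun v => if v = (i : ℤ) then 1 else 0
  have hneg : (-1 : ℤ) ≠ i := by omega
  simpa only [morseCount, hneg, if_false, zero_add, sum_add_distrib, Nat.cast_inj,
    sub_eq_iff_eq_add, ← Nat.cast_add_one, ← card_filter, card_filter_add_eq] using hsum

end SigmaRQ

/-- `σ_{rq}` is Morse, with the explicit Morse counts `μ_{rq}`. -/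
theorem stmt_2 (r q : ℕ) (hr : 1 ≤ r) (hq : 1 ≤ q) (hrq : 1 < r*q)
    (σ : Equiv.Perm ℕ) (hσ : SigmaRQ r q σ) :
    MorseProp (2*(r+1)*(q+1)-1) σ ∧
    (∀ i : ℕ, i < min r q →
      morseCount (2*(r+1)*(q+1)-1) σ i = 3 + 2*i) ∧
    (∀ i : ℕ, min r q ≤ i → i < max r q →
      morseCount (2*(r+1)*(q+1)-1) σ i = 2 + 2*(min r q)) ∧
    (∀ i : ℕ, max r q ≤ i → i ≤ r+q →
      morseCount (2*(r+1)*(q+1)-1) σ i = 2*(r+q)+1-2*i) ∧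
    (∀ i : ℕ, r+q < i →
      morseCount (2*(r+1)*(q+1)-1) σ i = 0) := by
  refine ⟨hσ.morseProp, ?_, ?_, ?_, ?_⟩ <;> intros <;> rw [hσ.morseCount_eq] <;> omega
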